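/- For every polygonal curve Q ∈ X^d_ℓ there exist indices 1 ≤ i < j ≤ m such that r_Q ⊆ r_{i,j}, where r_Q ∈ R and r_{i,j} ∈ R̃_0. Consequently, if R admits a set cover of size k, then R̃_0 admits a set cover of size at most k. -/

import Mathlib

/-! The Fréchet distance is symmetric and satisfies the triangle inequality on curves that are
bounded on `[0,1]`; boundedness is what keeps the real-valued supremum in `frechetDist` from taking
its junk value, and it holds for polygonal curves and for subcurves of the continuous curve `P`.

If `r_Q` is empty, any pair of indices works. Otherwise fix some `i < j` with
`d_F(Q, P[t_i,t_j]) ≤ Δ`, so that also `d_F(μ(i,j), P[t_i,t_j]) ≤ Δ`. Whenever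
`d_F(Q, P[t_{i'},t_{j'}]) ≤ Δ`, passing through `Q` and `P[t_i,t_j]` gives
`d_F(P[t_{i'},t_{j'}], μ(i,j)) ≤ 3Δ`, hence `r_Q ⊆ r_{i,j}`. Replacing each member of a cover
of `R` by such a superset proves the statement about covers. -/

open Set

noncomputable section

/-- Points in `ℝ^d`. -/
abbrev Pt (d : ℕ) : Type := EuclideanSpace ℝ (Fin d)

/-- A reparametrization: a continuous strictly increasing bijection of `[0,1]` onto itself. -/
def IsReparam (γ : ℝ → ℝ) : Prop :=
  ContinuousOn γ (Icc 0 1) ∧ StrictMonoOn γ (Icc 0 1) ∧ γ '' Icc 0 1 = Icc 0 1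

/-- The Fréchet distance `d_F(P,Q) = inf_γ sup_{t ∈ [0,1]} ‖P(γ(t)) - Q(t)‖`
(only the values of the curves on `[0,1]` are relevant). -/
def frechetDist {d : ℕ} (P Q : ℝ → Pt d) : ℝ :=
  ⨅ γ : {γ : ℝ → ℝ // IsReparam γ}, ⨆ s : Icc (0:ℝ) 1, ‖P (γ.1 s.1) - Q s.1‖

/-- The linearly parametrized line segment from `a` to `b`. -/
def seg {d : ℕ} (a b : Pt d) : ℝ → Pt d := fun s => (1 - s) • a + s • b

/-- The subcurve `P[a,b]` of `P`, linearly reparametrized over `[0,1]`. -/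
def subcurve {d : ℕ} (P : ℝ → Pt d) (a b : ℝ) : ℝ → Pt d := fun s => P (a + s * (b - a))

/-- The polygonal curve with vertex sequence `pts 0, …, pts n`, uniformly
parametrized over `[0,1]`. -/
def polyline {d n : ℕ} (pts : Fin (n + 1) → Pt d) : ℝ → Pt d := fun s =>
  if h : n = 0 then pts 0
  else
    let i : ℕ := min ⌊s * n⌋₊ (n - 1)
    have hi : i < n := lt_of_le_of_lt (min_le_right _ _) (by omega)
    (1 - (s * n - i)) • pts ⟨i, hi.trans n.lt_succ_self⟩ +
      (s * n - i) • pts ⟨i + 1, Nat.succ_lt_succ hi⟩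

/-- `f ∈ 𝕏^d_ℓ`: `f` is a polygonal curve with at most `ℓ` vertices. -/
def IsPolygonal {d : ℕ} (f : ℝ → Pt d) (ℓ : ℕ) : Prop :=
  ∃ n : ℕ, n + 1 ≤ ℓ ∧ ∃ pts : Fin (n + 1) → Pt d, f = polyline pts

/-- Concatenation of two curves (each parametrized over `[0,1]`). -/
def concat {d : ℕ} (f g : ℝ → Pt d) : ℝ → Pt d := fun s =>
  if s ≤ 1 / 2 then f (2 * s) else g (2 * s - 1)

/-- `CostLE P m t C Δ` states that the clustering cost satisfies `φ(P,C) ≤ Δ`: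
there is a family `I` of index pairs `(i,j)`, `1 ≤ i < j ≤ m`, with
`⋃_{(i,j) ∈ I} [t i, t j] = [0,1]`, such that every corresponding subcurve is
within Fréchet distance `Δ` of some center in `C`. -/
def CostLE {d : ℕ} (P : ℝ → Pt d) (m : ℕ) (t : ℕ → ℝ) (C : Set (ℝ → Pt d)) (Δ : ℝ) : Prop :=
  ∃ I : Set (ℕ × ℕ),
    (∀ q ∈ I, 1 ≤ q.1 ∧ q.1 < q.2 ∧ q.2 ≤ m) ∧
    (⋃ q ∈ I, Icc (t q.1) (t q.2)) = Icc (0:ℝ) 1 ∧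
    ∀ q ∈ I, ∃ c ∈ C, frechetDist (subcurve P (t q.1) (t q.2)) c ≤ Δ

/-- The set `r_Q` of the set system `R` (ground set `{1,…,m−1}`):
`r_Q = {z : ∃ i ≤ z < j, d_F(Q, P[t_i,t_j]) ≤ Δ}`. -/
def rSet {d : ℕ} (P : ℝ → Pt d) (m : ℕ) (t : ℕ → ℝ) (Δ : ℝ) (Q : ℝ → Pt d) : Set ℕ :=
  {z | 1 ≤ z ∧ z < m ∧ ∃ i j, 1 ≤ i ∧ i ≤ z ∧ z < j ∧ j ≤ m ∧
    frechetDist Q (subcurve P (t i) (t j)) ≤ Δ}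

/-- The set `r_{i,j}` of the set system `R̃₀`, defined from the simplifications `μ`. -/
def rTilde0 {d : ℕ} (P : ℝ → Pt d) (m : ℕ) (t : ℕ → ℝ) (Δ : ℝ)
    (μ : ℕ → ℕ → ℝ → Pt d) (i j : ℕ) : Set ℕ :=
  {z | 1 ≤ z ∧ z < m ∧ ∃ i' j', 1 ≤ i' ∧ i' ≤ z ∧ z < j' ∧ j' ≤ m ∧
    frechetDist (subcurve P (t i') (t j')) (μ i j) ≤ 3 * Δ}

/-- The curve `f` is bounded in norm on `[0,1]`. -/
def BddCurve {d : ℕ} (f : ℝ → Pt d) : Prop := ∃ M, ∀ s ∈ Icc (0:ℝ) 1, ‖f s‖ ≤ M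

lemma isReparam_id : IsReparam id :=
  ⟨continuousOn_id, strictMonoOn_id, by simp⟩

lemma IsReparam.mapsTo {γ : ℝ → ℝ} (h : IsReparam γ) {s : ℝ} (hs : s ∈ Icc (0:ℝ) 1) :
    γ s ∈ Icc (0:ℝ) 1 := h.2.2 ▸ mem_image_of_mem γ hs

lemma IsReparam.comp {γ δ : ℝ → ℝ} (hγ : IsReparam γ) (hδ : IsReparam δ) :
    IsReparam (γ ∘ δ) :=
  ⟨hγ.1.comp hδ.1 fun _ hs => hδ.mapsTo hs, hγ.2.1.comp hδ.2.1 fun _ hs => hδ.mapsTo hs, by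
    rw [image_comp, hδ.2.2, hγ.2.2]⟩

/-- A reparametrization has a right inverse on `[0,1]` that is again a reparametrization. -/
lemma IsReparam.exists_inv {γ : ℝ → ℝ} (hγ : IsReparam γ) :
    ∃ δ, IsReparam δ ∧ ∀ s ∈ Icc (0:ℝ) 1, γ (δ s) = s := by
  -- The inverse of an order isomorphism of `[0,1]` is automatically continuous.
  let e : Icc (0:ℝ) 1 ≃o Icc (0:ℝ) 1 :=
    (hγ.2.1.orderIso γ (Icc 0 1)).trans (OrderIso.setCongr _ _ hγ.2.2)
  let δ : ℝ → ℝ := IccExtend (zero_le_one' ℝ) fun s => (e.symm s : ℝ)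
  have hδ : ∀ s (hs : s ∈ Icc (0:ℝ) 1), δ s = e.symm ⟨s, hs⟩ := fun s hs =>
    IccExtend_of_mem _ _ hs
  have he : ∀ x : Icc (0:ℝ) 1, (e x : ℝ) = γ x := fun x => rfl
  refine ⟨δ, ⟨?_, ?_, ?_⟩, ?_⟩
  · exact ((continuous_subtype_val.comp e.symm.continuous).Icc_extend').continuousOn
  · intro a ha b hb hab
    rw [hδ a ha, hδ b hb]
    exact e.symm.strictMono (show (⟨a, ha⟩ : Icc (0:ℝ) 1) < ⟨b, hb⟩ from hab)
  · ext x
    constructor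
    · rintro ⟨s, hs, rfl⟩
      rw [hδ s hs]
      exact (e.symm ⟨s, hs⟩).2
    · intro hx
      refine ⟨e ⟨x, hx⟩, (e ⟨x, hx⟩).2, ?_⟩
      rw [hδ _ (e ⟨x, hx⟩).2]
      simp
  · intro s hs
    rw [hδ s hs, ← he]
    simp

/-- Any matching of width at most `a` bounds the Fréchet distance by `a`. -/
lemma frechetDist_le {d : ℕ} {f g : ℝ → Pt d} {γ : ℝ → ℝ} (hγ : IsReparam γ) {a : ℝ}
    (h : ∀ s ∈ Icc (0:ℝ) 1, ‖f (γ s) - g s‖ ≤ a) : frechetDist f g ≤ a := by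
  refine (ciInf_le ⟨0, ?_⟩ (⟨γ, hγ⟩ : {γ : ℝ → ℝ // IsReparam γ})).trans ?_
  · rintro _ ⟨γ, rfl⟩
    exact Real.iSup_nonneg fun _ => norm_nonneg _
  · haveI : Nonempty (Icc (0:ℝ) 1) := ⟨⟨0, by simp⟩⟩
    exact ciSup_le fun s => h s.1 s.2

/-- For bounded curves, every value above the Fréchet distance is the width of a matching. -/
lemma exists_of_frechetDist_lt {d : ℕ} {f g : ℝ → Pt d} (hf : BddCurve f) (hg : BddCurve g)
    {a : ℝ} (h : frechetDist f g < a) :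
    ∃ γ, IsReparam γ ∧ ∀ s ∈ Icc (0:ℝ) 1, ‖f (γ s) - g s‖ ≤ a := by
  haveI : Nonempty {γ : ℝ → ℝ // IsReparam γ} := ⟨⟨id, isReparam_id⟩⟩
  obtain ⟨⟨γ, hγ⟩, hlt⟩ := exists_lt_of_ciInf_lt h
  obtain ⟨M, hM⟩ := hf
  obtain ⟨N, hN⟩ := hg
  refine ⟨γ, hγ, fun s hs => le_trans ?_ hlt.le⟩
  refine le_ciSup (f := fun s : Icc (0:ℝ) 1 => ‖f (γ s.1) - g s.1‖) ⟨M + N, ?_⟩ ⟨s, hs⟩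
  rintro _ ⟨u, rfl⟩
  exact (norm_sub_le _ _).trans (add_le_add (hM _ (hγ.mapsTo u.2)) (hN _ u.2))

lemma frechetDist_symm_le {d : ℕ} {f g : ℝ → Pt d} (hf : BddCurve f) (hg : BddCurve g) :
    frechetDist g f ≤ frechetDist f g := by
  refine le_of_forall_gt_imp_ge_of_dense fun a ha => ?_
  obtain ⟨γ, hγ, h⟩ := exists_of_frechetDist_lt hf hg ha
  obtain ⟨δ, hδ, hinv⟩ := hγ.exists_inv
  refine frechetDist_le hδ fun s hs => ?_
  have := h _ (hδ.mapsTo hs)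
  rwa [hinv s hs, norm_sub_rev] at this

lemma frechetDist_triangle {d : ℕ} {f g h : ℝ → Pt d} (hf : BddCurve f) (hg : BddCurve g)
    (hh : BddCurve h) : frechetDist f h ≤ frechetDist f g + frechetDist g h := by
  refine le_of_forall_pos_le_add fun ε hε => ?_
  obtain ⟨γ, hγ, h₁⟩ := exists_of_frechetDist_lt hf hg
    (lt_add_of_pos_right (frechetDist f g) (half_pos hε))
  obtain ⟨δ, hδ, h₂⟩ := exists_of_frechetDist_lt hg hh
    (lt_add_of_pos_right (frechetDist g h) (half_pos hε))
  refine frechetDist_le (hγ.comp hδ) fun s hs => ?_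
  have := norm_sub_le_norm_sub_add_norm_sub (f (γ (δ s))) (g (δ s)) (h s)
  have := h₁ _ (hδ.mapsTo hs)
  have := h₂ s hs
  simp only [Function.comp_apply]
  linarith

lemma IsPolygonal.bddCurve {d ℓ : ℕ} {f : ℝ → Pt d} (hf : IsPolygonal f ℓ) : BddCurve f := by
  obtain ⟨n, -, pts, rfl⟩ := hf
  have hpt : ∀ i, ‖pts i‖ ≤ ∑ j, ‖pts j‖ := fun i =>
    Finset.single_le_sum (f := fun j => ‖pts j‖) (fun _ _ => norm_nonneg _) (Finset.mem_univ i)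
  set M := ∑ j, ‖pts j‖
  -- Both coefficients in `polyline` are crudely bounded by `n + 1` in absolute value.
  refine ⟨(n + 1) * M + (n + 1) * M, fun s hs => ?_⟩
  have hM : 0 ≤ M := (norm_nonneg _).trans (hpt 0)
  unfold polyline
  split_ifs with h
  · have := hpt 0
    have : 0 ≤ (n : ℝ) * M := by positivity
    linarith
  · dsimp only
    have hle : min ⌊s * n⌋₊ (n - 1) ≤ n := (min_le_right _ _).trans (Nat.sub_le _ _)
    have hi : ((min ⌊s * n⌋₊ (n - 1) : ℕ) : ℝ) ≤ n := by exact_mod_cast hle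
    have hi0 : (0:ℝ) ≤ ((min ⌊s * n⌋₊ (n - 1) : ℕ) : ℝ) := Nat.cast_nonneg _
    have hsn0 : 0 ≤ s * n := mul_nonneg hs.1 (Nat.cast_nonneg _)
    have hsn : s * n ≤ n := mul_le_of_le_one_left (Nat.cast_nonneg _) hs.2
    refine (norm_add_le _ _).trans (add_le_add ?_ ?_) <;>
    · rw [norm_smul, Real.norm_eq_abs]
      refine mul_le_mul (abs_le.2 ⟨?_, ?_⟩) (hpt _) (norm_nonneg _) (by positivity) <;> linarith

lemma bddCurve_subcurve {d : ℕ} {P : ℝ → Pt d} (hP : ContinuousOn P (Icc 0 1)) {a b : ℝ}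
    (ha : a ∈ Icc (0:ℝ) 1) (hb : b ∈ Icc (0:ℝ) 1) : BddCurve (subcurve P a b) := by
  obtain ⟨M, hM⟩ := isCompact_Icc.exists_bound_of_continuousOn hP
  refine ⟨M, fun s hs => hM _ ?_⟩
  have := (convex_Icc (0:ℝ) 1) ha hb (sub_nonneg.2 hs.2) hs.1 (by ring)
  convert this using 1
  simp only [smul_eq_mul]
  ring

/-- For every `Q ∈ 𝕏^d_ℓ` there are indices `1 ≤ i < j ≤ m` with
`r_Q ⊆ r_{i,j}`; consequently, a set cover of `R` of size `k` yields a set cover of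
`R̃₀` of size at most `k`. -/
theorem stmt4 {d ℓ : ℕ} (P : ℝ → Pt d) (hP : ContinuousOn P (Icc 0 1))
    (m : ℕ) (hm : 2 ≤ m) (t : ℕ → ℝ) (ht0 : t 1 = 0) (ht1 : t m = 1)
    (htmono : ∀ i, 1 ≤ i → i < m → t i < t (i + 1))
    (Δ : ℝ) (hΔ : 0 < Δ) (μ : ℕ → ℕ → ℝ → Pt d)
    (hμpoly : ∀ i j, 1 ≤ i → i < j → j ≤ m → IsPolygonal (μ i j) ℓ)
    (hμ : ∀ i j, 1 ≤ i → i < j → j ≤ m →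
      (∃ Q, IsPolygonal Q ℓ ∧ frechetDist Q (subcurve P (t i) (t j)) ≤ Δ) →
      frechetDist (μ i j) (subcurve P (t i) (t j)) ≤ Δ) :
    (∀ Q, IsPolygonal Q ℓ → ∃ i j, 1 ≤ i ∧ i < j ∧ j ≤ m ∧
      rSet P m t Δ Q ⊆ rTilde0 P m t Δ μ i j) ∧
    ∀ (k : ℕ) (Qc : Fin k → ℝ → Pt d), (∀ s, IsPolygonal (Qc s) ℓ) →
      (∀ z, 1 ≤ z → z < m → ∃ s, z ∈ rSet P m t Δ (Qc s)) →
      ∃ ij : Fin k → ℕ × ℕ,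
        (∀ s, 1 ≤ (ij s).1 ∧ (ij s).1 < (ij s).2 ∧ (ij s).2 ≤ m) ∧
        ∀ z, 1 ≤ z → z < m → ∃ s, z ∈ rTilde0 P m t Δ μ (ij s).1 (ij s).2 := by
  have hmono : ∀ i j, 1 ≤ i → i ≤ j → j ≤ m → t i ≤ t j := by
    intro i j hi hij
    induction j, hij using Nat.le_induction with
    | base => exact fun _ => le_rfl
    | succ j hij ih =>
      exact fun hj => (ih (by omega)).trans (htmono j (by omega) (by omega)).le
  have htm : ∀ i, 1 ≤ i → i ≤ m → t i ∈ Icc (0:ℝ) 1 := fun i h1 h2 =>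
    ⟨ht0 ▸ hmono 1 i le_rfl h1 h2, ht1 ▸ hmono i m h1 h2 le_rfl⟩
  have main : ∀ Q, IsPolygonal Q ℓ → ∃ i j, 1 ≤ i ∧ i < j ∧ j ≤ m ∧
      rSet P m t Δ Q ⊆ rTilde0 P m t Δ μ i j := by
    intro Q hQ
    rcases (rSet P m t Δ Q).eq_empty_or_nonempty with he | ⟨z, -, -, i, j, hi, hiz, hzj, hj, hd⟩
    · exact ⟨1, 2, le_rfl, by norm_num, hm, he ▸ empty_subset _⟩
    refine ⟨i, j, hi, by omega, hj, ?_⟩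
    rintro w ⟨hw1, hwm, i', j', hi', hiw, hwj, hj', hd'⟩
    refine ⟨hw1, hwm, i', j', hi', hiw, hwj, hj', ?_⟩
    have hμd := hμ i j hi (by omega) hj ⟨Q, hQ, hd⟩
    have bQ := hQ.bddCurve
    have bμ := (hμpoly i j hi (by omega) hj).bddCurve
    have bP := bddCurve_subcurve hP (htm i hi (by omega)) (htm j (by omega) hj)
    have bP' := bddCurve_subcurve hP (htm i' hi' (by omega)) (htm j' (by omega) hj')
    have h1 := frechetDist_triangle bP' bQ bμ
    have h2 := frechetDist_triangle bQ bP bμ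
    have h3 := frechetDist_symm_le bQ bP'
    have h4 := frechetDist_symm_le bμ bP
    linarith
  refine ⟨main, fun k Qc hQc hcov => ?_⟩
  choose a b h1 h2 h3 hsub using fun s => main (Qc s) (hQc s)
  refine ⟨fun s => (a s, b s), fun s => ⟨h1 s, h2 s, h3 s⟩, fun z hz hzm => ?_⟩
  obtain ⟨s, hs⟩ := hcov z hz hzm
  exact ⟨s, hsub s hs⟩
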